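/- Every non-medial hamiltonian distributive quasigroup has at least 729 elements; equivalently, every hamiltonian distributive quasigroup with fewer than 729 elements is medial. -/

import Mathlib

/-- A (binary operation on a nonempty set is a) quasigroup: all left and right
translations are bijections. -/
def IsQuasigroup {Q : Type*} (mul : Q → Q → Q) : Prop :=
  Nonempty Q ∧ ∀ a : Q,
    Function.Bijective (fun x => mul a x) ∧ Function.Bijective (fun x => mul x a)

/-- A subquasigroup: a nonempty subset closed under multiplication and under both
divisions (the unique solutions of `a·x = b` and `y·a = b` for `a, b ∈ P` lie in `P`). -/
def IsSubquasigroup {Q : Type*} (mul : Q → Q → Q) (P : Set Q) : Prop :=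
  P.Nonempty ∧ ∀ a ∈ P, ∀ b ∈ P,
    mul a b ∈ P ∧ (∀ x, mul a x = b → x ∈ P) ∧ (∀ y, mul y a = b → y ∈ P)

/-- A normal congruence: an equivalence relation satisfying (C1), (C2), (C3). -/
def IsNormalCongruence {Q : Type*} (mul : Q → Q → Q) (r : Q → Q → Prop) : Prop :=
  Equivalence r ∧
  (∀ a b c d, r a b → r c d → r (mul a c) (mul b d)) ∧
  (∀ a b c d, r a b → r (mul a c) (mul b d) → r c d) ∧
  (∀ a b c d, r c d → r (mul a c) (mul b d) → r a b)

/-- A subquasigroup is normal if it is an equivalence class of some normal congruence. -/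
def IsNormalSubquasigroup {Q : Type*} (mul : Q → Q → Q) (P : Set Q) : Prop :=
  IsSubquasigroup mul P ∧
  ∃ r : Q → Q → Prop, IsNormalCongruence mul r ∧ ∃ a : Q, P = {x | r a x}

/-- A quasigroup is hamiltonian if every subquasigroup is normal. -/
def IsHamiltonian {Q : Type*} (mul : Q → Q → Q) : Prop :=
  ∀ P : Set Q, IsSubquasigroup mul P → IsNormalSubquasigroup mul P

/-!
Fix `0 ∈ Q`. The operation `x * 0 + 0 * y = x * y` makes `Q` a commutative Moufang loop, and `Q` is
medial if this loop is a group. The maps `x ↦ 3x` and `T : x ↦ x + x * 0` are homomorphisms into the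
centre `Z` of the loop. If `Q` is finite and hamiltonian, associators are central, so that they form
an alternating trilinear map `[ , , ]` with `3 [x, y, w] = 0`; moreover `[x, y, w]` lies in every
`T`-invariant subgroup of `Z` containing `3x` and `T x`.

Let `u = [a, b, c] ≠ 0` and let `N` be maximal among the `T`-invariant subgroups of `Z` avoiding
`u`, so that `u` belongs to every nonzero `T`-invariant subgroup of `Z / N`. The homomorphism
`x ↦ ([x, b, c], [x, c, a], [x, a, b])` into `(Z / N)³` has at least `27` values. It vanishes on
`Z`, so `27 |Z| ≤ |Q|`. It is also determined by the class of `(3x, T x)` in the middle homology of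
the Koszul complex `Z / N → (Z / N)² → Z / N` of `3` and `T`, and comparing Euler characteristics
bounds the order of that homology by `|Z / N|`. Hence `27 ≤ |Z|`, and `729 = 27 · 27 ≤ |Q|`.
-/

theorem IsQuasigroup.isSubquasigroup_of_mul_mem {Q : Type*} [Finite Q] {mul : Q → Q → Q}
    (hQ : IsQuasigroup mul) {P : Set Q} (hP : P.Nonempty)
    (hmul : ∀ p ∈ P, ∀ q ∈ P, mul p q ∈ P) : IsSubquasigroup mul P := by
  have hmem {f : Q → Q} (hf : Function.Injective f) (hfP : ∀ p ∈ P, f p ∈ P) {x : Q}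
      (hx : f x ∈ P) : x ∈ P := by
    have himage : f '' P = P := Set.eq_of_subset_of_ncard_le (Set.image_subset_iff.2 hfP)
      (Set.ncard_image_of_injective P hf).ge
    rwa [← hf.mem_set_image, himage]
  exact ⟨hP, fun a ha b hb => ⟨hmul a ha b hb,
    fun x hx => hmem (hQ.2 a).1.1 (fun p hp => hmul a ha p hp) (hx ▸ hb),
    fun y hy => hmem (hQ.2 a).2.1 (fun p hp => hmul p hp a ha) (hy ▸ hb)⟩⟩

/-- `u` lies in the monolith of the group with operator `(Z, t)`: it belongs to every nonzero
`t`-invariant subgroup. -/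
def InMonolith {Z : Type*} [AddCommGroup Z] (t : Z →+ Z) (u : Z) : Prop :=
  ∀ N : AddSubgroup Z, N ≤ N.comap t → N ≠ ⊥ → u ∈ N

/-- The first map `z ↦ (s z, t z)` of the Koszul complex `Z → Z × Z → Z` of two endomorphisms. -/
def koszulIn {Z : Type*} [AddCommGroup Z] (s t : Z →+ Z) : Z →+ Z × Z :=
  s.prod t

/-- The second map `(p, q) ↦ t p - s q` of the Koszul complex `Z → Z × Z → Z` of two
endomorphisms. -/
def koszulOut {Z : Type*} [AddCommGroup Z] (s t : Z →+ Z) : Z × Z →+ Z :=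
  t.comp (AddMonoidHom.fst Z Z) - s.comp (AddMonoidHom.snd Z Z)

/-- The order of the middle homology of the Koszul complex `Z → Z × Z → Z` of two commuting
endomorphisms. -/
noncomputable def koszulIndex {Z : Type*} [AddCommGroup Z] (s t : Z →+ Z) : ℕ :=
  (koszulIn s t).range.relIndex (koszulOut s t).ker

section FiniteGroups

variable {Z : Type*} [AddCommGroup Z] {t : Z →+ Z} {u : Z}

@[simp]
theorem koszulIn_apply (s t : Z →+ Z) (z : Z) : koszulIn s t z = (s z, t z) := rfl

@[simp]
theorem koszulOut_apply (s t : Z →+ Z) (w : Z × Z) : koszulOut s t w = t w.1 - s w.2 := rfl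

theorem range_koszulIn_le_ker_koszulOut {s t : Z →+ Z} (hst : ∀ z, t (s z) = s (t z)) :
    (koszulIn s t).range ≤ (koszulOut s t).ker := by
  rintro _ ⟨z, rfl⟩
  rw [AddMonoidHom.mem_ker, koszulOut_apply, koszulIn_apply, hst, sub_self]

theorem card_ker_mul_card_range {G H : Type*} [AddGroup G] [AddGroup H]
    (f : G →+ H) : Nat.card f.ker * Nat.card f.range = Nat.card G := by
  rw [← AddSubgroup.index_ker, AddSubgroup.card_mul_index]

/-- This says that the multiplicative Euler characteristic of the Koszul complex is `1`. -/
theorem koszulIndex_mul_card_range [Finite Z] {s t : Z →+ Z} (hst : ∀ z, t (s z) = s (t z)) :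
    koszulIndex s t * Nat.card (koszulOut s t).range =
      Nat.card Z * Nat.card (koszulIn s t).ker := by
  have hmid := AddSubgroup.relIndex_mul_relIndex ⊥ _ _ bot_le
    (range_koszulIn_le_ker_koszulOut hst)
  simp only [AddSubgroup.relIndex_bot_left] at hmid
  have hin := card_ker_mul_card_range (koszulIn s t)
  have hout := card_ker_mul_card_range (koszulOut s t)
  rw [Nat.card_prod, ← hmid] at hout
  apply Nat.eq_of_mul_eq_mul_left (Nat.card_pos (α := (koszulIn s t).range))
  rw [koszulIndex, ← mul_assoc, hout]
  nth_rw 1 [← hin]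
  ring

theorem exists_quotient_inMonolith [Finite Z] (t : Z →+ Z) (hu : u ≠ 0) :
    ∃ (N : AddSubgroup Z) (hN : N ≤ N.comap t), u ∉ N ∧
      InMonolith (QuotientAddGroup.map N N t hN) (u : Z ⧸ N) := by
  obtain ⟨N, ⟨hN, huN⟩, hmax⟩ :=
    (Set.toFinite {N : AddSubgroup Z | N ≤ N.comap t ∧ u ∉ N}).exists_maximal
      ⟨⊥, bot_le, by simpa using hu⟩
  refine ⟨N, hN, huN, fun N' hN' hne => ?_⟩
  by_contra huN'
  have hle : N'.comap (QuotientAddGroup.mk' N) ≤ N := hmax ⟨fun x hx => hN' hx, huN'⟩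
    (QuotientAddGroup.le_comap_mk' N N')
  refine hne ((AddSubgroup.eq_bot_iff_forall _).2 fun y hy => ?_)
  obtain ⟨x, rfl⟩ := QuotientAddGroup.mk'_surjective N y
  exact (QuotientAddGroup.eq_zero_iff x).2 (hle hy)

variable {p : ℕ} [Fact p.Prime]

theorem card_ker_koszulIn_le_of_inMonolith [Finite Z] (hu : addOrderOf u = p)
    (hmon : InMonolith t u) : Nat.card (koszulIn (nsmulAddMonoidHom p) t).ker ≤ p := by
  suffices h : (koszulIn (nsmulAddMonoidHom p) t).ker ≤ AddSubgroup.zmultiples u by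
    simpa only [Nat.card_zmultiples, hu] using AddSubgroup.card_le_of_le h
  intro x hx
  obtain ⟨hpx, htx⟩ : p • x = 0 ∧ t x = 0 := by
    simpa only [AddMonoidHom.mem_ker, koszulIn_apply, nsmulAddMonoidHom_apply,
      Prod.mk_eq_zero] using hx
  rcases eq_or_ne x 0 with rfl | hx0
  · exact zero_mem _
  have hinv : AddSubgroup.zmultiples x ≤ (AddSubgroup.zmultiples x).comap t := by
    rw [AddSubgroup.zmultiples_le, AddSubgroup.mem_comap, htx]
    exact zero_mem _
  have hux := hmon _ hinv (AddSubgroup.zmultiples_ne_bot.2 hx0)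
  have heq := AddSubgroup.eq_of_le_of_card_ge (AddSubgroup.zmultiples_le.2 hux)
    (by rw [Nat.card_zmultiples, Nat.card_zmultiples, hu, addOrderOf_eq_prime hpx hx0])
  exact heq ▸ AddSubgroup.mem_zmultiples x

theorem koszulIndex_le_card_of_inMonolith [Finite Z] (hu : addOrderOf u = p)
    (hmon : InMonolith t u) (hindex : p ^ 2 < koszulIndex (nsmulAddMonoidHom p) t) :
    koszulIndex (nsmulAddMonoidHom p) t ≤ Nat.card Z := by
  have heuler := koszulIndex_mul_card_range (s := nsmulAddMonoidHom p) (t := t)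
    fun z => map_nsmul t p z
  have hker := card_ker_koszulIn_le_of_inMonolith hu hmon
  have hp : 0 < p := (Fact.out : p.Prime).pos
  rcases eq_or_ne (koszulOut (nsmulAddMonoidHom p) t).range ⊥ with hbot | hne
  · exfalso
    have htop : (koszulIn (nsmulAddMonoidHom p) t).ker = ⊤ := by
      have hzero := AddMonoidHom.range_eq_bot_iff.1 hbot
      refine (AddSubgroup.eq_top_iff' _).2 fun z => ?_
      have hs : p • z = 0 := by simpa using DFunLike.congr_fun hzero (0, z)
      have ht : t z = 0 := by simpa using DFunLike.congr_fun hzero (z, 0)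
      simp [AddMonoidHom.mem_ker, hs, ht]
    rw [htop, AddSubgroup.card_top] at heuler hker
    rw [hbot, AddSubgroup.card_bot, mul_one] at heuler
    exact absurd (Nat.mul_le_mul hker hker) (by rw [← heuler, ← sq]; exact hindex.not_ge)
  · have hinv : (koszulOut (nsmulAddMonoidHom p) t).range ≤
        (koszulOut (nsmulAddMonoidHom p) t).range.comap t := by
      rintro _ ⟨⟨x, y⟩, rfl⟩
      exact ⟨(t x, t y), by simp⟩
    have hrange : p ≤ Nat.card (koszulOut (nsmulAddMonoidHom p) t).range := by
      simpa only [Nat.card_zmultiples, hu] using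
        AddSubgroup.card_le_of_le (AddSubgroup.zmultiples_le.2 (hmon _ hinv hne))
    refine Nat.le_of_mul_le_mul_right ?_ hp
    calc koszulIndex (nsmulAddMonoidHom p) t * p
      _ ≤ koszulIndex (nsmulAddMonoidHom p) t *
            Nat.card (koszulOut (nsmulAddMonoidHom p) t).range :=
          Nat.mul_le_mul_left _ hrange
      _ ≤ Nat.card Z * p := heuler.trans_le (Nat.mul_le_mul_left _ hker)

theorem card_range_le_relIndex {G X W : Type*} [AddGroup G] {H K : AddSubgroup G} [Finite K]
    (k : X → K) (φ : X → W) (hφ : ∀ x y, -(k x : G) + k y ∈ H → φ x = φ y) :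
    Nat.card (Set.range φ) ≤ H.relIndex K := by
  let c : Set.range φ → K ⧸ H.addSubgroupOf K := fun w => QuotientAddGroup.mk (k w.2.choose)
  refine Nat.card_le_card_of_injective c fun v w hvw => Subtype.ext ?_
  rw [← v.2.choose_spec, ← w.2.choose_spec]
  have hmem : -k v.2.choose + k w.2.choose ∈ H.addSubgroupOf K := QuotientAddGroup.eq.1 hvw
  exact hφ _ _ hmem

theorem addOrderOf_pow_le_card_mrange {Q M ι : Type*} [AddZeroClass Q] [AddGroup M] [Finite M]
    [Fintype ι] [DecidableEq ι] {u : M} (Φ : Q →+ ι → M)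
    (hΦ : ∀ i, Pi.single i u ∈ AddMonoidHom.mrange Φ) :
    addOrderOf u ^ Fintype.card ι ≤ Nat.card (AddMonoidHom.mrange Φ) := by
  have hle : AddSubmonoid.pi Set.univ (fun _ : ι => AddSubmonoid.multiples u) ≤
      AddMonoidHom.mrange Φ := by
    refine AddSubmonoid.pi_le_iff.2 fun i => ?_
    rw [AddSubmonoid.map_le_iff_le_comap, AddSubmonoid.multiples_le]
    exact hΦ i
  calc addOrderOf u ^ Fintype.card ι
      = Nat.card (ι → AddSubmonoid.multiples u) := by
        rw [Nat.card_fun, Nat.card_addSubmonoidMultiples, Nat.card_eq_fintype_card]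
    _ = Nat.card (AddSubmonoid.pi Set.univ fun _ : ι => AddSubmonoid.multiples u) :=
        (Nat.card_congr (Equiv.Set.univPi fun _ : ι => (AddSubmonoid.multiples u : Set M))).symm
    _ ≤ Nat.card (AddMonoidHom.mrange Φ) :=
        Nat.card_le_card_of_injective _ (AddSubmonoid.inclusion_injective hle)

end FiniteGroups

/-- A commutative Moufang loop, written additively. -/
class CommMoufangLoop (Q : Type*) extends AddCommMagma Q, AddZeroClass Q, Neg Q where
  protected neg_add_cancel_left (x y : Q) : -x + (x + y) = y
  protected moufang (x a b : Q) : (x + a) + (x + b) = x + (x + (a + b))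

namespace CommMoufangLoop

open AddSubmonoid (center)

section Loop

variable {Q : Type*} [CommMoufangLoop Q]

instance : IsLeftCancelAdd Q where
  add_left_cancel x a b h := by
    simpa only [CommMoufangLoop.neg_add_cancel_left] using congrArg (-x + ·) h

instance : IsRightCancelAdd Q := AddCommMagma.IsLeftCancelAdd.toIsRightCancelAdd Q

theorem add_neg_self (x : Q) : x + -x = 0 := by
  simpa only [add_zero, add_comm] using CommMoufangLoop.neg_add_cancel_left x 0

instance : InvolutiveNeg Q where
  neg_neg x := by
    apply add_left_cancel (a := -x)
    rw [add_neg_self, add_comm, add_neg_self]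

theorem add_neg_add_cancel (x y : Q) : x + (-x + y) = y := by
  simpa only [neg_neg] using CommMoufangLoop.neg_add_cancel_left (-x) y

theorem neg_zero_eq : -(0 : Q) = 0 := by
  rw [← zero_add (-(0 : Q)), add_neg_self]

theorem neg_add_eq (x y : Q) : -(x + y) = -x + -y := by
  have h : -(x + y) + x = -y := by
    have := CommMoufangLoop.neg_add_cancel_left (x + y) (-y)
    rwa [add_comm (x + y) (-y), add_comm x y, CommMoufangLoop.neg_add_cancel_left,
      add_comm y x] at this
  rw [← h, add_comm _ x, CommMoufangLoop.neg_add_cancel_left]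

theorem neg_add_eq_zero_iff {a b : Q} : -a + b = 0 ↔ b = a := by
  constructor
  · intro h
    rw [← add_neg_add_cancel a b, h, add_zero]
  · rintro rfl
    rw [add_comm, add_neg_self]

theorem add_add_eq_add_add_neg_add (x a b : Q) : x + (a + b) = (x + (x + a)) + (-x + b) := by
  have h := CommMoufangLoop.moufang x (a + b) (-b)
  have hb : -x + b = -(x + -b) := by rw [neg_add_eq, neg_neg]
  rw [add_comm a b, add_comm (b + a) (-b), CommMoufangLoop.neg_add_cancel_left] at h
  rw [← h, hb, add_comm _ (-(x + -b)), add_comm _ (x + -b),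
    CommMoufangLoop.neg_add_cancel_left, add_comm a b]

theorem add_self_add (x y : Q) : (x + x) + y = x + (x + y) := by
  simpa only [zero_add, add_zero, CommMoufangLoop.neg_add_cancel_left] using
    (add_add_eq_add_add_neg_add x 0 (x + y)).symm

/-- Doubling as an endomorphism of the loop. -/
def double : Q →+ Q where
  toFun x := x + x
  map_zero' := add_zero 0
  map_add' x y := by rw [CommMoufangLoop.moufang, add_self_add]

theorem mem_center_iff {z : Q} : z ∈ center Q ↔ ∀ a b, z + (a + b) = (z + a) + b := by
  refine ⟨fun h => h.left_assoc, fun h => ⟨fun a => add_comm z a, h, fun a b => ?_⟩⟩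
  rw [add_comm, add_comm a b, h, add_comm, add_comm z b]

theorem map_zero_mem_center {f : Q → Q} (hf : ∀ a b, f (a + b) = f a + b) :
    f 0 ∈ center Q := by
  have hf0 (a : Q) : f 0 + a = f a := by rw [← hf, zero_add]
  rw [mem_center_iff]
  intro a b
  rw [hf0, hf0, hf]

theorem coe_add_assoc (z : center Q) (a b : Q) : (z + a) + b = z + (a + b) :=
  (z.2.left_assoc a b).symm

theorem coe_add_left_comm (z : center Q) (a b : Q) : a + (z + b) = z + (a + b) :=
  (z.2.left_comm a b).symm

theorem coe_add_add_coe_add (z w : center Q) (a b : Q) :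
    (z + a) + (w + b) = ((z + w : center Q) : Q) + (a + b) := by
  rw [coe_add_left_comm, coe_add_assoc, AddSubmonoid.coe_add, coe_add_assoc,
    coe_add_left_comm z]

instance : Neg (center Q) where
  neg z := ⟨-z, mem_center_iff.2 fun a b => by
    apply add_left_cancel (a := (z : Q))
    rw [add_neg_add_cancel, ← coe_add_assoc, add_neg_add_cancel]⟩

instance : AddCommGroup (center Q) :=
  { AddSubmonoid.center.addCommMonoid' with
    zsmul := zsmulRec
    neg_add_cancel := fun z => Subtype.ext (neg_add_eq_zero_iff.2 rfl) }

theorem map_neg_eq {G : Type*} [AddGroup G] (F : Q →+ G) (x : Q) : F (-x) = -F x := by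
  rw [eq_neg_iff_add_eq_zero, ← map_add, add_comm, add_neg_self, map_zero]

/-- The homomorphism `x ↦ x + f x` into the centre. -/
def idAddHom (f : Q →+ Q) (hf : ∀ x, x + f x ∈ center Q) : Q →+ center Q where
  toFun x := ⟨x + f x, hf x⟩
  map_zero' := Subtype.ext (by simp only [map_zero, add_zero, AddSubmonoid.coe_zero])
  map_add' x y := by
    -- Each `f x` is a central element minus `x`, so the identity can be read off `f (x + y)`.
    let g (x : Q) : center Q := ⟨x + f x, hf x⟩
    have hsub (x : Q) : f x = g x + -x := by
      rw [show (g x : Q) = x + f x from rfl, add_comm, CommMoufangLoop.neg_add_cancel_left]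
    apply Subtype.ext
    apply add_right_cancel (b := -(x + y))
    calc ((g (x + y) : Q) + -(x + y)) = f x + f y := by rw [← hsub, map_add]
      _ = (g x + -x) + (g y + -y) := congrArg₂ _ (hsub x) (hsub y)
      _ = ((g x + g y : center Q) : Q) + -(x + y) := by rw [coe_add_add_coe_add, neg_add_eq]

theorem add_double_mem_center (x : Q) : x + double x ∈ center Q := by
  have hassoc (a b : Q) : x + (x + (x + (a + b))) = (x + (x + (x + a))) + b := by
    rw [← CommMoufangLoop.moufang x a b, add_add_eq_add_add_neg_add x,
      CommMoufangLoop.neg_add_cancel_left]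
  have h := map_zero_mem_center (f := fun a => x + (x + (x + a))) hassoc
  simp only [add_zero] at h
  exact h

/-- The homomorphism `x ↦ 3x` into the centre. -/
def triple : Q →+ center Q :=
  idAddHom double add_double_mem_center

theorem coe_triple (x : Q) : (triple x : Q) = x + (x + x) := rfl

theorem triple_coe (z : center Q) : triple (z : Q) = 3 • z :=
  Subtype.ext (by
    rw [succ_nsmul', two_nsmul, coe_triple, AddSubmonoid.coe_add, AddSubmonoid.coe_add])

theorem map_triple {G : Type*} [AddMonoid G] (F : Q →+ G) (x : Q) :
    F (triple x) = 3 • F x := by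
  rw [coe_triple, map_add, map_add, succ_nsmul', two_nsmul]

/-- The associator of three elements, the right difference of `(x + y) + w` and `x + (y + w)`. -/
def associator (x y w : Q) : Q := -(x + (y + w)) + ((x + y) + w)

theorem associator_eq_zero_iff {x y w : Q} :
    associator x y w = 0 ↔ (x + y) + w = x + (y + w) :=
  neg_add_eq_zero_iff

theorem associator_rev (x y w : Q) : associator x y w = -associator w y x := by
  rw [associator, associator, neg_add_eq (-(w + (y + x))), neg_neg, add_comm (w + _),
    add_comm (w + y), add_comm w y, add_comm w, add_comm y x, add_comm (-_)]

theorem associator_coe (z : center Q) (y w : Q) : associator (z : Q) y w = 0 :=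
  associator_eq_zero_iff.2 (coe_add_assoc z y w)

theorem associator_self (x w : Q) : associator x x w = 0 :=
  associator_eq_zero_iff.2 (add_self_add x w)

end Loop

variable (Q : Type*) [CommMoufangLoop Q]

/-- All associators are central, i.e. the loop is centrally nilpotent of class at most two. -/
def AssociatorsCentral : Prop := ∀ x y w : Q, associator x y w ∈ center Q

variable {Q}

namespace AssociatorsCentral

variable (hQ : AssociatorsCentral Q)
include hQ

/-- The associator as a map into the centre; it is trilinear and alternating. -/
def form (x y w : Q) : center Q := ⟨associator x y w, hQ x y w⟩

theorem coe_form (x y w : Q) : (hQ.form x y w : Q) = associator x y w := rfl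

theorem add_add_eq_form_add (x y w : Q) : (x + y) + w = hQ.form x y w + (x + (y + w)) := by
  rw [add_comm (hQ.form x y w : Q), coe_form, associator, add_neg_add_cancel]

theorem form_coe (z : center Q) (y w : Q) : hQ.form z y w = 0 :=
  Subtype.ext (associator_coe z y w)

theorem form_rev (x y w : Q) : hQ.form x y w = -hQ.form w y x :=
  Subtype.ext (associator_rev x y w)

theorem form_self_left (x w : Q) : hQ.form x x w = 0 :=
  Subtype.ext (associator_self x w)

theorem form_add_left (a b y w : Q) :
    hQ.form (a + b) y w = hQ.form a y w + hQ.form b y w := by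
  have htrans (x : Q) : w + (y + x) = (y + w) + (hQ.form x y w + x) := by
    rw [add_comm y x, add_comm w, hQ.add_add_eq_form_add, coe_add_left_comm, add_comm x]
  -- Splitting twice, along `y` and `w` on one side and along `y + w` on the other, compares the
  -- translates of a sum by the form; the pair `(a + b, 0)` evaluates the same expression.
  have hsplit (a b : Q) : w + (w + (y + (y + (a + b)))) =
      (y + w) + ((y + w) + ((hQ.form a y w + a) + (hQ.form b y w + b))) := by
    rw [← CommMoufangLoop.moufang y, ← CommMoufangLoop.moufang w, htrans, htrans,
      CommMoufangLoop.moufang (y + w)]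
  have h := hsplit (a + b) 0
  rw [add_zero, hsplit a b] at h
  have h' := add_left_cancel (add_left_cancel h)
  rw [coe_add_add_coe_add, hQ.coe_form 0, ← AddSubmonoid.coe_zero (center Q),
    associator_coe, AddSubmonoid.coe_zero, add_zero, add_zero] at h'
  exact (Subtype.ext (add_right_cancel h')).symm

theorem form_jacobi (x y w : Q) : hQ.form x y w + hQ.form y w x + hQ.form w x y = 0 := by
  have h := hQ.add_add_eq_form_add x y w
  rw [add_comm x (y + w), hQ.add_add_eq_form_add y w x, add_comm y (w + x),
    hQ.add_add_eq_form_add w x y, add_comm w (x + y), ← coe_add_assoc, ← AddSubmonoid.coe_add,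
    ← coe_add_assoc, ← AddSubmonoid.coe_add] at h
  exact Subtype.ext (add_right_cancel ((zero_add _).trans h)).symm

theorem form_add_right (x y a b : Q) :
    hQ.form x y (a + b) = hQ.form x y a + hQ.form x y b := by
  rw [form_rev, form_add_left, form_rev hQ x y a, form_rev hQ x y b, neg_add]

theorem form_add_middle (x a b w : Q) :
    hQ.form x (a + b) w = hQ.form x a w + hQ.form x b w := by
  have hcyc (y : Q) : hQ.form x y w = -(hQ.form y w x + hQ.form w x y) := by
    rw [eq_neg_iff_add_eq_zero, ← add_assoc, form_jacobi]
  rw [hcyc, hcyc, hcyc, form_add_left, form_add_right]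
  abel

theorem form_swap (x y w : Q) : hQ.form x y w = -hQ.form y x w := by
  have h := hQ.form_self_left (x + y) w
  rw [form_add_middle, form_add_left, form_add_left, form_self_left, form_self_left,
    zero_add, add_zero, add_comm] at h
  exact eq_neg_of_add_eq_zero_left h

theorem form_rotate (x y w : Q) : hQ.form x y w = hQ.form y w x := by
  rw [form_swap, form_rev, neg_neg, form_swap, form_rev, neg_neg, form_swap, form_rev, neg_neg]

theorem three_nsmul_form (x y w : Q) : 3 • hQ.form x y w = 0 := by
  rw [← hQ.form_jacobi x y w, ← form_rotate hQ x y w, form_rotate hQ w x y, succ_nsmul, two_nsmul]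

/-- The form as a homomorphism in its first variable. -/
def formHom (y w : Q) : Q →+ center Q where
  toFun x := hQ.form x y w
  map_zero' := hQ.form_coe 0 y w
  map_add' a b := hQ.form_add_left a b y w

/-- The homomorphism `x ↦ ([x, b, c], [x, c, a], [x, a, b])` modulo a central subgroup `N`, where
`[ , , ]` is the form. -/
def coordHom (N : AddSubgroup (center Q)) (a b c : Q) : Q →+ Fin 3 → center Q ⧸ N :=
  AddMonoidHom.pi fun i =>
    (QuotientAddGroup.mk' N).comp (![hQ.formHom b c, hQ.formHom c a, hQ.formHom a b] i)

theorem coordHom_coe (N : AddSubgroup (center Q)) (a b c : Q) (z : center Q) :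
    hQ.coordHom N a b c z = 0 := by
  refine funext fun i => congrArg (QuotientAddGroup.mk' N) ?_
  fin_cases i <;> exact hQ.form_coe z _ _

theorem single_mem_mrange_coordHom (N : AddSubgroup (center Q)) (a b c : Q) (i : Fin 3) :
    Pi.single i (hQ.form a b c : center Q ⧸ N) ∈ AddMonoidHom.mrange (hQ.coordHom N a b c) := by
  have hmiddle (x w : Q) : hQ.form x w x = 0 := by
    rw [form_rotate, form_rotate, form_self_left]
  refine ⟨![a, b, c] i, funext fun j => ?_⟩
  fin_cases i <;> fin_cases j <;>
    simp [coordHom, formHom, form_self_left, hmiddle, form_rotate hQ b c a, ← form_rotate hQ c a b]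

end AssociatorsCentral

section Hamiltonian

variable {Q : Type*} [CommMoufangLoop Q] {T : Q →+ center Q}

/-- The loop is hamiltonian as a loop with operator `T`: every subloop closed under `T` is the class
of `0` of a congruence. -/
def IsHamiltonianOver (T : Q →+ center Q) : Prop :=
  ∀ P : AddSubmonoid Q, (∀ p ∈ P, -p ∈ P) → (∀ p ∈ P, (T p : Q) ∈ P) →
    ∃ r : AddCon Q, ∀ x, x ∈ P ↔ r 0 x

/-- The restriction of a homomorphism into the centre to an endomorphism of the centre. -/
def centerEnd (T : Q →+ center Q) : center Q →+ center Q := T.comp (center Q).subtype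

theorem exists_add_eq_add_of_mem_signs {N : AddSubgroup (center Q)} {x : Q} (h3 : triple x ∈ N)
    {ε δ : Q} (hε : ε ∈ ({0, x, -x} : Set Q)) (hδ : δ ∈ ({0, x, -x} : Set Q)) :
    ∃ n ∈ N, ∃ η ∈ ({0, x, -x} : Set Q), (n : Q) + η = ε + δ := by
  have hdouble (x : Q) : (triple x : Q) + -x = x + x := by
    rw [coe_triple, add_comm, CommMoufangLoop.neg_add_cancel_left]
  have hdouble_neg : ((-triple x : center Q) : Q) + x = -x + -x := by
    rw [← hdouble, map_neg_eq, neg_neg]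
  have h0 : (0 : Q) ∈ ({0, x, -x} : Set Q) := by simp
  rcases hε with rfl | rfl | rfl
  · exact ⟨0, zero_mem N, δ, hδ, rfl⟩
  · rcases hδ with rfl | rfl | rfl
    · exact ⟨0, zero_mem N, ε, by simp, by simp⟩
    · exact ⟨_, h3, -δ, by simp, hdouble δ⟩
    · exact ⟨0, zero_mem N, 0, h0, by simp [add_neg_self]⟩
  · rcases hδ with rfl | rfl | rfl
    · exact ⟨0, zero_mem N, -x, by simp, by simp⟩
    · exact ⟨0, zero_mem N, 0, h0, by simp [add_comm, add_neg_self]⟩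
    · exact ⟨_, neg_mem h3, x, by simp, hdouble_neg⟩

/-- The subloop generated by a central subgroup `N` and an element `x` with `3x ∈ N`. -/
def adjoin (N : AddSubgroup (center Q)) (x : Q) (h3 : triple x ∈ N) : AddSubmonoid Q where
  carrier := {p | ∃ n ∈ N, ∃ ε ∈ ({0, x, -x} : Set Q), (n : Q) + ε = p}
  zero_mem' := ⟨0, zero_mem N, 0, by simp, add_zero _⟩
  add_mem' := by
    rintro _ _ ⟨m, hm, ε, hε, rfl⟩ ⟨n, hn, δ, hδ, rfl⟩
    obtain ⟨k, hk, η, hη, h⟩ := exists_add_eq_add_of_mem_signs h3 hε hδ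
    refine ⟨m + n + k, add_mem (add_mem hm hn) hk, η, hη, ?_⟩
    rw [coe_add_add_coe_add, ← h, AddSubmonoid.coe_add _ (m + n), coe_add_assoc]

section Adjoin

variable {N : AddSubgroup (center Q)} {x : Q} {h3 : triple x ∈ N}

theorem coe_mem_adjoin {n : center Q} (hn : n ∈ N) : (n : Q) ∈ adjoin N x h3 :=
  ⟨n, hn, 0, by simp, add_zero _⟩

theorem self_mem_adjoin : x ∈ adjoin N x h3 :=
  ⟨0, zero_mem N, x, by simp, zero_add x⟩

theorem neg_mem_adjoin {p : Q} (hp : p ∈ adjoin N x h3) : -p ∈ adjoin N x h3 := by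
  obtain ⟨n, hn, ε, hε, rfl⟩ := hp
  refine ⟨-n, neg_mem hn, -ε, ?_, (neg_add_eq _ _).symm⟩
  rcases hε with rfl | rfl | rfl <;> simp [neg_zero_eq]

theorem map_mem_adjoin (hN : N ≤ N.comap (centerEnd T)) (hx : T x ∈ N) {p : Q}
    (hp : p ∈ adjoin N x h3) : (T p : Q) ∈ adjoin N x h3 := by
  obtain ⟨n, hn, ε, hε, rfl⟩ := hp
  have hTε : T ε ∈ N := by
    rcases hε with rfl | rfl | rfl
    · rw [map_zero]; exact zero_mem N
    · exact hx
    · rw [map_neg_eq]; exact neg_mem hx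
  rw [map_add]
  exact coe_mem_adjoin (add_mem (hN hn) hTε)

theorem coe_or_exists_add_eq_of_mem_adjoin {p : Q} (hp : p ∈ adjoin N x h3) :
    (∃ n ∈ N, (n : Q) = p) ∨ ∃ n ∈ N, (n : Q) + p = x ∨ (n : Q) + -p = x := by
  obtain ⟨n, hn, ε, hε, rfl⟩ := hp
  rcases hε with rfl | rfl | rfl
  · exact .inl ⟨n, hn, (add_zero _).symm⟩
  · exact .inr ⟨-n, neg_mem hn, .inl (CommMoufangLoop.neg_add_cancel_left _ _)⟩
  · refine .inr ⟨n, hn, .inr ?_⟩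
    rw [neg_add_eq, neg_neg, add_neg_add_cancel]

theorem associator_eq_zero_of_mem_adjoin_top {x w : Q}
    (hx : x ∈ adjoin ⊤ w (AddSubgroup.mem_top _)) (y : Q) : associator x y w = 0 := by
  obtain ⟨n, -, ε, hε, rfl⟩ := hx
  rw [associator_eq_zero_iff, coe_add_assoc, coe_add_assoc, coe_add_assoc]
  congr 1
  rcases hε with rfl | rfl | rfl
  · rw [zero_add, zero_add]
  · rw [add_comm, add_comm y]
  · rw [add_comm, add_neg_add_cancel, add_comm y, CommMoufangLoop.neg_add_cancel_left]

end Adjoin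

namespace IsHamiltonianOver

variable (hT : IsHamiltonianOver T)
include hT

theorem associator_mem_adjoin {N : AddSubgroup (center Q)} (hN : N ≤ N.comap (centerEnd T))
    {x : Q} (h3 : triple x ∈ N) (hx : T x ∈ N) (y w : Q) :
    associator x y w ∈ adjoin N x h3 := by
  obtain ⟨r, hr⟩ := hT (adjoin N x h3) (fun _ => neg_mem_adjoin) fun _ => map_mem_adjoin hN hx
  have hx0 : r 0 x := (hr x).1 self_mem_adjoin
  have hright : r (y + w) (x + (y + w)) := by
    simpa only [zero_add] using r.add hx0 (r.refl (y + w))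
  have hleft : r (y + w) ((x + y) + w) := by
    simpa only [zero_add] using r.add (r.add hx0 (r.refl y)) (r.refl w)
  have h := r.add (r.refl (-(x + (y + w)))) (r.trans (r.symm hright) hleft)
  rw [neg_add_eq_zero_iff.2 rfl] at h
  exact (hr _).2 h

theorem associator_mem_adjoin_top (x y w : Q) :
    associator x y w ∈ adjoin ⊤ x (AddSubgroup.mem_top _) :=
  hT.associator_mem_adjoin le_top _ (AddSubgroup.mem_top _) y w

theorem associatorsCentral : AssociatorsCentral Q := by
  intro x y w
  have hx := hT.associator_mem_adjoin_top x y w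
  have hw := neg_mem_adjoin (hT.associator_mem_adjoin_top w y x)
  rw [← associator_rev] at hw
  rcases coe_or_exists_add_eq_of_mem_adjoin hx with ⟨n, -, hn⟩ | ⟨n, -, hn⟩
  · exact hn ▸ n.2
  · have hmem : x ∈ adjoin ⊤ w (AddSubgroup.mem_top _) := by
      have hcoe := coe_mem_adjoin (x := w) (h3 := AddSubgroup.mem_top _) (AddSubgroup.mem_top n)
      rcases hn with hn | hn
      · exact hn ▸ add_mem hcoe hw
      · exact hn ▸ add_mem hcoe (neg_mem_adjoin hw)
    rw [associator_eq_zero_of_mem_adjoin_top hmem]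
    exact zero_mem _

theorem form_mem {N : AddSubgroup (center Q)} (hN : N ≤ N.comap (centerEnd T))
    {x : Q} (h3 : triple x ∈ N) (hx : T x ∈ N) (y w : Q) :
    hT.associatorsCentral.form x y w ∈ N := by
  set p := hT.associatorsCentral.form x y w with hp
  rcases coe_or_exists_add_eq_of_mem_adjoin (hT.associator_mem_adjoin hN h3 hx y w) with
    ⟨n, hn, hnp⟩ | ⟨n, -, h⟩
  · exact (Subtype.ext hnp : n = p) ▸ hn
  · obtain ⟨z, rfl⟩ : ∃ z : center Q, (z : Q) = x :=
      h.elim (fun h => ⟨n + p, h⟩) fun h => ⟨n + -p, h⟩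
    rw [hp, AssociatorsCentral.form_coe]
    exact zero_mem N

theorem coordHom_eq_zero {N : AddSubgroup (center Q)} (hN : N ≤ N.comap (centerEnd T))
    (a b c : Q) {x : Q} (h3 : triple x ∈ N) (hx : T x ∈ N) :
    hT.associatorsCentral.coordHom N a b c x = 0 := by
  refine funext fun i => (QuotientAddGroup.eq_zero_iff _).2 ?_
  fin_cases i <;> exact hT.form_mem hN h3 hx _ _

end IsHamiltonianOver

/-- The homomorphism `x ↦ (3x, T x)` modulo a central subgroup `N`. -/
def pairHom (T : Q →+ center Q) (N : AddSubgroup (center Q)) :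
    Q →+ (center Q ⧸ N) × (center Q ⧸ N) :=
  ((QuotientAddGroup.mk' N).comp triple).prod ((QuotientAddGroup.mk' N).comp T)

theorem pairHom_eq_zero_iff {N : AddSubgroup (center Q)} {x : Q} :
    pairHom T N x = 0 ↔ triple x ∈ N ∧ T x ∈ N := by
  rw [← QuotientAddGroup.eq_zero_iff, ← QuotientAddGroup.eq_zero_iff]
  exact Prod.mk_eq_zero

section Koszul

variable {N : AddSubgroup (center Q)} (hN : N ≤ N.comap (centerEnd T))

theorem pairHom_mem_ker_koszulOut (x : Q) :
    pairHom T N x ∈ (koszulOut (nsmulAddMonoidHom 3)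
      (QuotientAddGroup.map N N (centerEnd T) hN)).ker := by
  change ((T (triple x) : center Q) : center Q ⧸ N) - 3 • ((T x : center Q) : center Q ⧸ N) = 0
  rw [map_triple, QuotientAddGroup.mk_nsmul, sub_self]

theorem pairHom_coe (z : center Q) :
    pairHom T N z = koszulIn (nsmulAddMonoidHom 3)
      (QuotientAddGroup.map N N (centerEnd T) hN) (z : center Q ⧸ N) := by
  change ((triple (z : Q) : center Q ⧸ N), ((T z : center Q) : center Q ⧸ N)) = _
  rw [triple_coe]
  rfl

variable {A : Type*} [AddGroup A] (Φ : Q →+ A) (hcenter : ∀ z : center Q, Φ z = 0)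
include hcenter

theorem map_eq_of_pairHom_mem_range_koszulIn
    (hΦ : ∀ d, triple d ∈ N → T d ∈ N → Φ d = 0) {x y : Q}
    (h : -pairHom T N x + pairHom T N y ∈ (koszulIn (nsmulAddMonoidHom 3)
      (QuotientAddGroup.map N N (centerEnd T) hN)).range) : Φ x = Φ y := by
  obtain ⟨z', hz'⟩ := h
  obtain ⟨z, rfl⟩ := QuotientAddGroup.mk'_surjective N z'
  have hd : pairHom T N (-(z : Q) + (-x + y)) = 0 := by
    rw [map_add, map_add, map_neg_eq, map_neg_eq, ← hz', pairHom_coe hN]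
    exact neg_add_cancel _
  obtain ⟨h3, hT⟩ := pairHom_eq_zero_iff.1 hd
  have h := hΦ _ h3 hT
  rwa [map_add, map_neg_eq, hcenter, neg_zero, zero_add, map_add, map_neg_eq,
    neg_add_eq_zero] at h

theorem card_mrange_le_koszulIndex [Finite Q] (hΦ : ∀ d, triple d ∈ N → T d ∈ N → Φ d = 0) :
    Nat.card (AddMonoidHom.mrange Φ) ≤ koszulIndex (nsmulAddMonoidHom 3)
      (QuotientAddGroup.map N N (centerEnd T) hN) :=
  card_range_le_relIndex (fun x => ⟨pairHom T N x, pairHom_mem_ker_koszulOut hN x⟩) Φ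
    fun _ _ => map_eq_of_pairHom_mem_range_koszulIn hN Φ hcenter hΦ

end Koszul

theorem card_mrange_mul_card_center_le [Finite Q] {A : Type*} [AddZeroClass A]
    (Φ : Q →+ A) (hcenter : ∀ z : center Q, Φ z = 0) :
    Nat.card (AddMonoidHom.mrange Φ) * Nat.card (center Q) ≤ Nat.card Q := by
  rw [← Nat.card_prod]
  let f (vz : AddMonoidHom.mrange Φ × center Q) : Q := vz.2 + vz.1.2.choose
  have hf (vz) : Φ (f vz) = vz.1 := by
    rw [map_add, hcenter, zero_add]
    exact vz.1.2.choose_spec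
  refine Nat.card_le_card_of_injective f fun ⟨v, z⟩ ⟨v', z'⟩ h => ?_
  obtain rfl : v = v' := Subtype.ext ((hf (v, z)).symm.trans ((congrArg Φ h).trans (hf (v', z'))))
  exact Prod.ext rfl (Subtype.ext (add_right_cancel h))

theorem IsHamiltonianOver.le_card_of_add_assoc_ne [Finite Q] (hT : IsHamiltonianOver T) {a b c : Q}
    (habc : (a + b) + c ≠ a + (b + c)) : 729 ≤ Nat.card Q := by
  have hQ := hT.associatorsCentral
  have hu : hQ.form a b c ≠ 0 := fun h => habc (associator_eq_zero_iff.1 (congrArg Subtype.val h))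
  obtain ⟨N, hN, huN, hmon⟩ := exists_quotient_inMonolith (centerEnd T) hu
  let Φ := hQ.coordHom N a b c
  have horder : addOrderOf (hQ.form a b c : center Q ⧸ N) = 3 := by
    refine addOrderOf_eq_prime ?_ fun h => huN ((QuotientAddGroup.eq_zero_iff _).1 h)
    rw [← QuotientAddGroup.mk_nsmul, hQ.three_nsmul_form, QuotientAddGroup.mk_zero]
  have hrange : 27 ≤ Nat.card (AddMonoidHom.mrange Φ) := by
    simpa [horder] using addOrderOf_pow_le_card_mrange Φ (hQ.single_mem_mrange_coordHom N a b c)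
  have hcenter := hQ.coordHom_coe N a b c
  have hindex := hrange.trans
    (card_mrange_le_koszulIndex hN Φ hcenter fun _ => hT.coordHom_eq_zero hN a b c)
  have hcard : 27 ≤ Nat.card (center Q) := calc
    27 ≤ koszulIndex (nsmulAddMonoidHom 3) (QuotientAddGroup.map N N (centerEnd T) hN) := hindex
    _ ≤ Nat.card (center Q ⧸ N) :=
      koszulIndex_le_card_of_inMonolith horder hmon (lt_of_lt_of_le (by norm_num) hindex)
    _ ≤ Nat.card (center Q) :=
      Nat.card_le_card_of_surjective _ (QuotientAddGroup.mk'_surjective N)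
  calc 729 = 27 * 27 := rfl
    _ ≤ Nat.card (AddMonoidHom.mrange Φ) * Nat.card (center Q) := Nat.mul_le_mul hrange hcard
    _ ≤ Nat.card Q := card_mrange_mul_card_center_le Φ hcenter

end Hamiltonian

end CommMoufangLoop

/-- A distributive quasigroup with a chosen element `0`, around which the loop
`x * 0 + 0 * y = x * y` is built. The element `0` is not absorbing. -/
class PointedDistribQuasigroup (Q : Type*) extends Mul Q, Zero Q where
  protected mul_left_bijective (a : Q) : Function.Bijective (a * ·)
  protected mul_right_bijective (a : Q) : Function.Bijective (· * a)
  protected mul_mul_left (x a b : Q) : x * (a * b) = (x * a) * (x * b)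
  protected mul_mul_right (x a b : Q) : (a * b) * x = (a * x) * (b * x)

namespace PointedDistribQuasigroup

variable {Q : Type*} [PointedDistribQuasigroup Q]

theorem mul_self (x : Q) : x * x = x :=
  ((PointedDistribQuasigroup.mul_right_bijective (x * x)).1
    (PointedDistribQuasigroup.mul_mul_left x x x)).symm

theorem exists_mul_zero_eq (x : Q) : ∃ y, y * 0 = x :=
  (PointedDistribQuasigroup.mul_right_bijective 0).2 x

theorem exists_zero_mul_eq (x : Q) : ∃ y, 0 * y = x :=
  (PointedDistribQuasigroup.mul_left_bijective 0).2 x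

theorem zero_mul_mul_zero (x : Q) : 0 * (x * 0) = (0 * x) * 0 := by
  rw [PointedDistribQuasigroup.mul_mul_left, mul_self]

noncomputable instance : Add Q where
  add x y :=
    (Equiv.ofBijective _ (PointedDistribQuasigroup.mul_right_bijective 0)).symm x *
      (Equiv.ofBijective _ (PointedDistribQuasigroup.mul_left_bijective 0)).symm y

theorem mul_zero_add_zero_mul (x y : Q) : x * 0 + 0 * y = x * y :=
  congrArg₂ (· * ·) (Equiv.ofBijective_symm_apply_apply _ _ x)
    (Equiv.ofBijective_symm_apply_apply _ _ y)

theorem add_left_bijective (x : Q) : Function.Bijective (x + ·) :=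
  (PointedDistribQuasigroup.mul_left_bijective _).comp (Equiv.bijective _)

theorem add_right_bijective (x : Q) : Function.Bijective (· + x) :=
  (PointedDistribQuasigroup.mul_right_bijective _).comp (Equiv.bijective _)

instance : IsCancelAdd Q where
  add_left_cancel x _ _ h := (add_left_bijective x).1 h
  add_right_cancel x _ _ h := (add_right_bijective x).1 h

noncomputable instance : AddZeroClass Q where
  zero_add x := by
    obtain ⟨y, rfl⟩ := exists_zero_mul_eq x
    simpa only [mul_self] using mul_zero_add_zero_mul 0 y
  add_zero x := by
    obtain ⟨y, rfl⟩ := exists_mul_zero_eq x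
    simpa only [mul_self] using mul_zero_add_zero_mul y 0

theorem mul_zero_add_zero_mul_self (x : Q) : x * 0 + 0 * x = x := by
  rw [mul_zero_add_zero_mul, mul_self]

theorem add_mul_zero (x y : Q) : (x + y) * 0 = x * 0 + y * 0 := by
  obtain ⟨x, rfl⟩ := exists_mul_zero_eq x
  obtain ⟨y, rfl⟩ := exists_zero_mul_eq y
  rw [mul_zero_add_zero_mul, ← zero_mul_mul_zero, mul_zero_add_zero_mul,
    PointedDistribQuasigroup.mul_mul_right]

theorem zero_mul_add (x y : Q) : 0 * (x + y) = 0 * x + 0 * y := by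
  obtain ⟨x, rfl⟩ := exists_mul_zero_eq x
  obtain ⟨y, rfl⟩ := exists_zero_mul_eq y
  rw [mul_zero_add_zero_mul, zero_mul_mul_zero, mul_zero_add_zero_mul,
    PointedDistribQuasigroup.mul_mul_left]

theorem add_add_distrib_left (x a b : Q) : x + (a + b) = (x * 0 + a) + (0 * x + b) := by
  obtain ⟨x, rfl⟩ := exists_mul_zero_eq x
  obtain ⟨a, rfl⟩ := exists_zero_mul_eq a
  obtain ⟨a, rfl⟩ := exists_mul_zero_eq a
  obtain ⟨b, rfl⟩ := exists_zero_mul_eq b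
  obtain ⟨b, rfl⟩ := exists_zero_mul_eq b
  calc x * 0 + (0 * (a * 0) + 0 * (0 * b))
      = x * (a * b) := by rw [← zero_mul_add, mul_zero_add_zero_mul, mul_zero_add_zero_mul]
    _ = (x * a) * 0 + 0 * (x * b) := by
        rw [PointedDistribQuasigroup.mul_mul_left, mul_zero_add_zero_mul]
    _ = ((x * 0) * 0 + 0 * (a * 0)) + (0 * (x * 0) + 0 * (0 * b)) := by
        rw [← mul_zero_add_zero_mul x a, ← mul_zero_add_zero_mul x b, add_mul_zero, zero_mul_add,
          zero_mul_mul_zero a]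

theorem add_add_distrib_right (a b x : Q) : (a + b) + x = (a + x * 0) + (b + 0 * x) := by
  obtain ⟨x, rfl⟩ := exists_zero_mul_eq x
  obtain ⟨a, rfl⟩ := exists_mul_zero_eq a
  obtain ⟨a, rfl⟩ := exists_mul_zero_eq a
  obtain ⟨b, rfl⟩ := exists_zero_mul_eq b
  obtain ⟨b, rfl⟩ := exists_mul_zero_eq b
  calc ((a * 0) * 0 + 0 * (b * 0)) + 0 * x
      = (a * b) * x := by
        rw [zero_mul_mul_zero, ← add_mul_zero, mul_zero_add_zero_mul, mul_zero_add_zero_mul]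
    _ = (a * x) * 0 + 0 * (b * x) := by
        rw [PointedDistribQuasigroup.mul_mul_right, mul_zero_add_zero_mul]
    _ = ((a * 0) * 0 + (0 * x) * 0) + (0 * (b * 0) + 0 * (0 * x)) := by
        rw [← mul_zero_add_zero_mul a x, ← mul_zero_add_zero_mul b x, add_mul_zero, zero_mul_add]

theorem mul_zero_add_eq_iff {x a s : Q} : x * 0 + a = s + x * 0 ↔ x + a = s + x := by
  have hleft := add_add_distrib_left x a 0
  have hright := add_add_distrib_right s 0 x
  rw [add_zero, add_zero] at hleft
  rw [add_zero, zero_add] at hright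
  rw [hleft, hright, add_left_inj]

theorem zero_mul_add_eq_iff {x a s : Q} : 0 * x + a = s + 0 * x ↔ x + a = s + x := by
  have hleft := add_add_distrib_left x 0 a
  have hright := add_add_distrib_right 0 s x
  rw [zero_add, add_zero] at hleft
  rw [zero_add, zero_add] at hright
  rw [hleft, hright, add_right_inj]

theorem mul_zero_add_eq_of_add_eq {q x y s : Q} (hq : q + x = x + y) (hs : y + s = x + y) :
    q * 0 + x = y * 0 + s ∧ q * 0 + 0 * x = y * 0 + 0 * s := by
  have hx : x + y * 0 = q * 0 + x := by
    rw [← mul_zero_add_eq_iff, ← add_mul_zero, ← add_mul_zero, hq]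
  have hy : y + 0 * s = 0 * x + y := by
    rw [← zero_mul_add_eq_iff, ← zero_mul_add, ← zero_mul_add, hs]
  exact ⟨hx.symm.trans (mul_zero_add_eq_iff.2 hs).symm,
    (zero_mul_add_eq_iff.2 hx).symm.trans (mul_zero_add_eq_iff.2 hy).symm⟩

noncomputable instance : AddCommMagma Q where
  add_comm x y := by
    obtain ⟨q, hq⟩ := (add_right_bijective x).2 (x + y)
    obtain ⟨s, hs⟩ := (add_left_bijective y).2 (x + y)
    obtain ⟨h, hzero⟩ := mul_zero_add_eq_of_add_eq hq hs
    rw [mul_zero_add_zero_mul, mul_zero_add_zero_mul] at hzero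
    obtain ⟨x, rfl⟩ := exists_zero_mul_eq x
    obtain ⟨s, rfl⟩ := exists_zero_mul_eq s
    rw [mul_zero_add_zero_mul, mul_zero_add_zero_mul] at h
    -- Left distributivity turns `hzero` into `(q * 0) * (q * x) = (y * 0) * (y * s)`.
    rw [PointedDistribQuasigroup.mul_mul_left q, PointedDistribQuasigroup.mul_mul_left y,
      h] at hzero
    have hqy : q = y := (PointedDistribQuasigroup.mul_right_bijective 0).1
      ((PointedDistribQuasigroup.mul_right_bijective _).1 hzero)
    exact hqy ▸ hq.symm

noncomputable instance : Neg Q where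
  neg x := ((add_left_bijective x).2 0).choose

theorem add_neg_self (x : Q) : x + -x = 0 := ((add_left_bijective x).2 0).choose_spec

theorem add_neg_add_cancel (x b : Q) : x + (-x + b) = b := by
  obtain ⟨x, rfl⟩ := exists_mul_zero_eq x
  have hneg := add_add_distrib_left x (-(x * 0)) b
  have hzero := add_add_distrib_left x (-(x * 0) + b) 0
  rw [add_neg_self, zero_add] at hneg
  rw [add_zero, add_zero, hneg, add_comm] at hzero
  exact (add_right_cancel hzero).symm

theorem mul_zero_add_zero_mul_add (x b : Q) : x * 0 + (0 * x + b) = x + b := by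
  simpa only [zero_add, add_zero] using (add_add_distrib_left x 0 b).symm

theorem zero_mul_add_mul_zero_add (x b : Q) : 0 * x + (x * 0 + b) = x + b := by
  simpa only [add_zero, zero_add, add_comm b, add_comm (_ + b)] using
    (add_add_distrib_left x b 0).symm

noncomputable instance : CommMoufangLoop Q where
  neg_add_cancel_left x y := by
    apply add_left_cancel (a := x)
    rw [add_neg_add_cancel]
  moufang x a b := by
    rw [add_add_distrib_left x a b, add_comm (x * 0 + a), add_add_distrib_left x (0 * x + b),
      mul_zero_add_zero_mul_add, zero_mul_add_mul_zero_add, add_comm]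

open AddSubmonoid (center)

/-- Right translation by `0` as an endomorphism of the loop. -/
noncomputable def mulZeroHom : Q →+ Q where
  toFun x := x * 0
  map_zero' := mul_self 0
  map_add' := add_mul_zero

theorem add_mulZeroHom_mem_center (x : Q) : x + mulZeroHom x ∈ center Q := by
  have hassoc (a b : Q) : x + (x * 0 + (a + b)) = (x + (x * 0 + a)) + b := by
    rw [CommMoufangLoop.add_add_eq_add_add_neg_add (x * 0), add_comm (x * 0 + _),
      add_add_distrib_left x, add_neg_add_cancel, zero_mul_add_mul_zero_add, add_comm]
  have h := CommMoufangLoop.map_zero_mem_center (f := fun a => x + (x * 0 + a)) hassoc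
  simp only [add_zero] at h
  exact h

/-- The homomorphism `x ↦ x + x * 0` into the centre of the loop. -/
noncomputable def toCenter : Q →+ center Q :=
  CommMoufangLoop.idAddHom mulZeroHom add_mulZeroHom_mem_center

theorem coe_toCenter (x : Q) : (toCenter x : Q) = x + x * 0 := rfl

theorem medial_of_add_assoc (hassoc : ∀ a b c : Q, (a + b) + c = a + (b + c)) (x y u v : Q) :
    (x * y) * (u * v) = (x * u) * (y * v) := by
  have hexpand (x y u v : Q) :
      (x * y) * (u * v) = ((x * 0) * 0 + 0 * (y * 0)) + (0 * (u * 0) + 0 * (0 * v)) := by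
    rw [← mul_zero_add_zero_mul (x * y), ← mul_zero_add_zero_mul x y, ← mul_zero_add_zero_mul u v,
      add_mul_zero, zero_mul_add, zero_mul_mul_zero y]
  let _ : AddCommSemigroup Q := { add_assoc := hassoc, add_comm := add_comm }
  rw [hexpand, hexpand, add_add_add_comm]

/-- A normal congruence of the quasigroup, as a congruence of its loop. -/
def addConOfIsNormalCongruence {r : Q → Q → Prop}
    (hr : IsNormalCongruence (fun x y : Q => x * y) r) : AddCon Q where
  r := r
  iseqv := hr.1
  add' := by
    obtain ⟨hequiv, hmul, hright, hleft⟩ := hr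
    intro w x y z hwx hyz
    obtain ⟨w, rfl⟩ := exists_mul_zero_eq w
    obtain ⟨x, rfl⟩ := exists_mul_zero_eq x
    obtain ⟨y, rfl⟩ := exists_zero_mul_eq y
    obtain ⟨z, rfl⟩ := exists_zero_mul_eq z
    rw [mul_zero_add_zero_mul, mul_zero_add_zero_mul]
    exact hmul _ _ _ _ (hleft _ _ _ _ (hequiv.refl 0) hwx) (hright _ _ _ _ (hequiv.refl 0) hyz)

theorem isQuasigroup : IsQuasigroup fun x y : Q => x * y :=
  ⟨⟨0⟩, fun a => ⟨PointedDistribQuasigroup.mul_left_bijective a,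
    PointedDistribQuasigroup.mul_right_bijective a⟩⟩

theorem mul_mem_of_toCenter_mem {P : AddSubmonoid Q} (hneg : ∀ p ∈ P, -p ∈ P)
    (hP : ∀ p ∈ P, (toCenter p : Q) ∈ P) {p q : Q} (hp : p ∈ P) (hq : q ∈ P) : p * q ∈ P := by
  have hmul_zero {p : Q} (hp : p ∈ P) : p * 0 ∈ P := by
    have hsum := add_mem (hneg p hp) (hP p hp)
    rwa [coe_toCenter, CommMoufangLoop.neg_add_cancel_left] at hsum
  have hzero_mul : 0 * q = -(q * 0) + q := by
    nth_rw 3 [← mul_zero_add_zero_mul_self q]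
    rw [CommMoufangLoop.neg_add_cancel_left]
  rw [← mul_zero_add_zero_mul, hzero_mul]
  exact add_mem (hmul_zero hp) (add_mem (hneg _ (hmul_zero hq)) hq)

theorem isHamiltonianOver_toCenter [Finite Q] (h : IsHamiltonian fun x y : Q => x * y) :
    CommMoufangLoop.IsHamiltonianOver (toCenter : Q →+ center Q) := by
  intro P hneg hP
  obtain ⟨-, r, hr, a, hPa⟩ := h P (isQuasigroup.isSubquasigroup_of_mul_mem ⟨0, zero_mem P⟩
    fun p hp q hq => mul_mem_of_toCenter_mem hneg hP hp hq)
  have hmem (x : Q) : x ∈ P ↔ r a x := Set.ext_iff.1 hPa x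
  have ha0 : r a 0 := (hmem 0).1 (zero_mem P)
  exact ⟨addConOfIsNormalCongruence hr, fun x => (hmem x).trans
    ⟨hr.1.trans (hr.1.symm ha0), hr.1.trans ha0⟩⟩

end PointedDistribQuasigroup

/-- Every non-medial hamiltonian distributive quasigroup has at least 729 elements. -/
theorem nonmedial_hamiltonian_distributive_card {Q : Type*} (mul : Q → Q → Q)
    (hQ : IsQuasigroup mul)
    (hld : ∀ x a b : Q, mul x (mul a b) = mul (mul x a) (mul x b))
    (hrd : ∀ x a b : Q, mul (mul a b) x = mul (mul a x) (mul b x))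
    (hham : IsHamiltonian mul)
    (hnonmed : ¬ ∀ x y u v : Q, mul (mul x y) (mul u v) = mul (mul x u) (mul y v)) :
    729 ≤ Cardinal.mk Q := by
  rcases finite_or_infinite Q with _ | _
  · obtain ⟨⟨e⟩, hbij⟩ := hQ
    let _ : PointedDistribQuasigroup Q :=
      { mul := mul
        zero := e
        mul_left_bijective := fun a => (hbij a).1
        mul_right_bijective := fun a => (hbij a).2
        mul_mul_left := hld
        mul_mul_right := hrd }
    obtain ⟨a, b, c, habc⟩ : ∃ a b c : Q, (a + b) + c ≠ a + (b + c) := by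
      by_contra! hassoc
      exact hnonmed (PointedDistribQuasigroup.medial_of_add_assoc hassoc)
    have hcard :=
      (PointedDistribQuasigroup.isHamiltonianOver_toCenter hham).le_card_of_add_assoc_ne habc
    rw [← Nat.cast_card (α := Q)]
    exact_mod_cast hcard
  · exact (Cardinal.natCast_lt_aleph0 (n := 729)).le.trans (Cardinal.aleph0_le_mk Q)
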